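/- Let k ≥ 1, let H₁, …, H_k be complex Hilbert spaces, H = ⊕_{i=1}^k H_i, and 𝒜 a bounded linear operator on H with block entries A_{ij} : H_j → H_i. Then the block numerical range is contained in the classical numerical range: W_{H₁,…,H_k}(𝒜) ⊆ W(𝒜), i.e., every eigenvalue of a k×k matrix (⟨A_{ij} f_j, f_i⟩)_{i,j} with unit vectors f_i ∈ H_i is of the form ⟨𝒜x, x⟩ for some x ∈ H with ‖x‖ = 1. -/

import Mathlib

open scoped InnerProductSpace

/-- The Hilbert-space direct sum `⊕_{i} H i` (with the `ℓ²` product inner product) of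
complete spaces is complete. -/
instance piLp_completeSpace {k : ℕ} (H : Fin k → Type*) [∀ i, NormedAddCommGroup (H i)]
    [∀ i, CompleteSpace (H i)] : CompleteSpace (PiLp 2 H) :=
  inferInstance

/-- The block numerical range is contained in the classical numerical range,
`W_{H₁,…,H_k}(𝒜) ⊆ W(𝒜)`: every eigenvalue `λ` of a `k×k` matrix
`(⟨A_{ij} f_j, f_i⟩)_{i,j}` built from unit vectors `f i ∈ H i` is of the form `⟨𝒜x, x⟩`
for some unit vector `x ∈ H = ⊕_{i=1}^k H_i`. -/
theorem blockNumericalRange_subset_numericalRange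
    (k : ℕ) (hk : 1 ≤ k) (H : Fin k → Type*) [∀ i, NormedAddCommGroup (H i)]
    [∀ i, InnerProductSpace ℂ (H i)] [∀ i, CompleteSpace (H i)]
    (𝒜 : PiLp 2 H →L[ℂ] PiLp 2 H) (A : ∀ i j, H j →L[ℂ] H i)
    (h𝒜 : ∀ (x : PiLp 2 H) (i : Fin k),
      (WithLp.equiv 2 (∀ i, H i)) (𝒜 x) i = ∑ j, A i j ((WithLp.equiv 2 (∀ i, H i)) x j))
    (lam : ℂ) (f : ∀ i, H i) (hf : ∀ i, ‖f i‖ = 1) (v : Fin k → ℂ) (hv : v ≠ 0)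
    (heig : (Matrix.of fun i j => ⟪f i, A i j (f j)⟫_ℂ).mulVec v = lam • v) :
    ∃ x : PiLp 2 H, ‖x‖ = 1 ∧ ⟪x, 𝒜 x⟫_ℂ = lam := by
  set y : PiLp 2 H := WithLp.toLp 2 fun i => v i • f i with hy
  have hself : ⟪y, y⟫_ℂ = ∑ i, star (v i) * v i := by
    simp only [PiLp.inner_apply, hy, inner_smul_left, inner_smul_right]
    refine Finset.sum_congr rfl fun i _ => ?_
    rw [inner_self_eq_norm_sq_to_K, hf i]
    simp [mul_comm]
  have hform : ⟪y, 𝒜 y⟫_ℂ = lam * ⟪y, y⟫_ℂ := by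
    rw [hself, PiLp.inner_apply, Finset.mul_sum]
    refine Finset.sum_congr rfl fun i _ => ?_
    have hrow : ∑ j, ⟪f i, A i j (f j)⟫_ℂ * v j = lam * v i := by
      simpa [Matrix.mulVec, dotProduct] using congrFun heig i
    have hblock : (𝒜 y) i = ∑ j, v j • A i j (f j) := by
      simpa [hy] using h𝒜 y i
    calc ⟪y i, (𝒜 y) i⟫_ℂ = star (v i) * ∑ j, ⟪f i, A i j (f j)⟫_ℂ * v j := by
          rw [hblock]
          simp [hy, Finset.mul_sum, mul_comm, mul_left_comm]
      _ = lam * (star (v i) * v i) := by rw [hrow]; ring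
  have hy0 : y ≠ 0 := by
    intro h
    refine hv (funext fun i => ?_)
    have hi : v i • f i = 0 := congrArg (fun z : PiLp 2 H => z i) h
    have hfi : f i ≠ 0 := norm_ne_zero_iff.mp (by simp [hf i])
    exact (smul_eq_zero.mp hi).resolve_right hfi
  have hnorm : (‖y‖ : ℂ) ≠ 0 := by simpa using hy0
  refine ⟨(‖y‖⁻¹ : ℂ) • y, by simpa using norm_smul_inv_norm (𝕜 := ℂ) hy0, ?_⟩
  rw [map_smul, inner_smul_left, inner_smul_right, hform, inner_self_eq_norm_sq_to_K]
  simp only [map_inv₀, Complex.conj_ofReal, Complex.coe_algebraMap]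
  field_simp
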